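/- Let a, b ∈ 𝔽_q^* with a ≠ wb for every w ∈ 𝔽_p^*, write α = Tr(a²), β = Tr(b²), γ = Tr(ab), and set Ω₄ = Σ_{d ∈ 𝔽_q} Σ_{x ∈ 𝔽_p^*} ζ_p^{x·Tr(d²)} Σ_{y ∈ 𝔽_p^*} ζ_p^{y·Tr(ad)} Σ_{z ∈ 𝔽_p^*} ζ_p^{z·Tr(bd)}. If m is even, then: Ω₄ = G(p−1)³ if α = β = γ = 0; Ω₄ = G(p−1) if α ≠ 0, β ≠ 0 and αβ = γ²; Ω₄ = η̄(γ² − αβ)·p(p−1)G + G(p−1) if α ≠ 0, β ≠ 0 and αβ ≠ γ²; Ω₄ = −G(p−1)² if exactly one of α, β, γ is nonzero; and Ω₄ = G(p−1) if exactly one of α, β is zero and γ ≠ 0. -/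

import Mathlib

open Finset
open scoped Classical

noncomputable section

/-- `ζ_p = exp(2πi/p)`. -/
def zeta (p : ℕ) : ℂ := Complex.exp (2 * Real.pi * Complex.I / p)

/-- The canonical additive character of `ℤ/p`: `χ̄₁(c) = ζ_p^c`. -/
def chiBar (p : ℕ) (c : ZMod p) : ℂ := zeta p ^ c.val

/-- The quadratic character of `(ℤ/p)^*`, extended by `η̄(0) = 0`. -/
def etaBar (p : ℕ) (c : ZMod p) : ℂ :=
  if c = 0 then 0 else if IsSquare c then 1 else -1

/-- The quadratic character of `F^*`, extended by `η(0) = 0`. -/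
def etaQ (F : Type) [Field F] (x : F) : ℂ :=
  if x = 0 then 0 else if IsSquare x then 1 else -1

/-- The absolute trace map from `F` to `ℤ/p`. -/
def Trq (p : ℕ) (F : Type) [Field F] [Algebra (ZMod p) F] (x : F) : ZMod p :=
  Algebra.trace (ZMod p) F x

/-- The canonical additive character of `F`: `χ₁(x) = ζ_p^{Tr x}`. -/
def chiQ (p : ℕ) (F : Type) [Field F] [Algebra (ZMod p) F] (x : F) : ℂ :=
  chiBar p (Trq p F x)

/-- The quadratic Gauss sum `G` over `F`. -/
def GaussQ (p : ℕ) (F : Type) [Field F] [Fintype F] [Algebra (ZMod p) F] : ℂ :=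
  ∑ x ∈ univ.filter (fun x : F => x ≠ 0), etaQ F x * chiQ p F x

/-- The quadratic Gauss sum `Ḡ` over `ℤ/p`. -/
def GaussP (p : ℕ) [NeZero p] : ℂ :=
  ∑ y ∈ univ.filter (fun y : ZMod p => y ≠ 0), etaBar p y * chiBar p y

/-!
Expanding `Ω₄` gives a sum over `x, y, z ∈ 𝔽_p^*` of the Weil sums `∑ d, χ₁(x d² + u d)` with
`u = y a + z b`. Completing the square evaluates each of them as `η(x) G χ₁(-u² / (4x))`, and
`η(x) = 1` because an element of `𝔽_p` is a square in an extension of even degree. Since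
`-1 / (4x)` runs through `𝔽_p^*` along with `x`, the sum over `x` only detects whether
`Tr(u²) = α y² + 2γ y z + β z²` vanishes. By homogeneity one may set `z = 1`, so `Ω₄` is determined
by the number of nonzero roots of `α t² + 2γ t + β`, and this number is read off the discriminant.
-/

lemma four_ne_zero_of_ringChar_ne_two {R : Type*} [NonAssocRing R] [Nontrivial R]
    [NoZeroDivisors R] (hR : ringChar R ≠ 2) : (4 : R) ≠ 0 := by
  rw [← two_add_two_eq_four, ← two_mul]
  exact mul_ne_zero (Ring.two_ne_zero hR) (Ring.two_ne_zero hR)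

section QuadraticSums

variable {F R : Type*} [Field F] [Fintype F] [DecidableEq F] [CommRing R]

/-- The Gauss sum of the quadratic character of `F` against the additive character `ψ`, that is,
`∑ x, η(x) ψ(x)`, with values in the target ring of `ψ`. -/
def quadraticGaussSum (ψ : AddChar F R) : R :=
  gaussSum ((quadraticChar F).ringHomComp (Int.castRingHom R)) ψ

lemma quadraticGaussSum_mulShift (ψ : AddChar F R) {x : F} (hx : x ≠ 0) :
    quadraticGaussSum (ψ.mulShift x) = quadraticChar F x * quadraticGaussSum ψ := by
  have h := gaussSum_mulShift_eq ((quadraticChar F).ringHomComp (Int.castRingHom R)) ψ (.mk0 x hx)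
  rwa [((quadraticChar_isQuadratic F).comp _).inv] at h

variable [IsDomain R]

lemma sum_addChar_sq (hF : ringChar F ≠ 2) {ψ : AddChar F R} (hψ : ψ ≠ 1) :
    ∑ d : F, ψ (d ^ 2) = quadraticGaussSum ψ := by
  have card_sqrts (y : F) : (#{d : F | d ^ 2 = y} : R) = quadraticChar F y + 1 := by
    have h := quadraticChar_card_sqrts hF y
    rw [Set.toFinset_ofPred] at h
    exact_mod_cast congrArg (Int.cast : ℤ → R) h
  calc
    ∑ d : F, ψ (d ^ 2) = ∑ y : F, (#{d : F | d ^ 2 = y} : R) * ψ y := by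
      simp only [← nsmul_eq_mul]
      exact (sum_fiberwise' univ (fun d : F ↦ d ^ 2) ψ).symm.trans (by simp only [sum_const])
    _ = ∑ y : F, quadraticChar F y * ψ y + ∑ y : F, ψ y := by
      simp only [card_sqrts, add_mul, one_mul, sum_add_distrib]
    _ = quadraticGaussSum ψ := by rw [AddChar.sum_eq_zero_of_ne_one hψ, add_zero]; rfl

lemma sum_addChar_mul_sq_add_mul (hF : ringChar F ≠ 2) {ψ : AddChar F R} (hψ : ψ ≠ 1)
    {x : F} (hx : x ≠ 0) (u : F) :
    ∑ d : F, ψ (x * d ^ 2 + u * d) =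
      quadraticChar F x * quadraticGaussSum ψ * ψ (-(4 * x)⁻¹ * u ^ 2) := by
  have htwo : (2 : F) ≠ 0 := Ring.two_ne_zero hF
  have hfour : (4 : F) ≠ 0 := four_ne_zero_of_ringChar_ne_two hF
  have complete_square (d : F) :
      x * d ^ 2 + u * d = x * (d + u / (2 * x)) ^ 2 + -(4 * x)⁻¹ * u ^ 2 := by
    field_simp
    ring
  calc
    ∑ d : F, ψ (x * d ^ 2 + u * d)
      = (∑ d : F, ψ.mulShift x ((d + u / (2 * x)) ^ 2)) * ψ (-(4 * x)⁻¹ * u ^ 2) := by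
      simp only [complete_square, AddChar.map_add_eq_mul, AddChar.mulShift_apply, sum_mul]
    _ = (∑ d : F, ψ.mulShift x (d ^ 2)) * ψ (-(4 * x)⁻¹ * u ^ 2) := by
      rw [← Equiv.sum_comp (Equiv.addRight (u / (2 * x))) fun d ↦ ψ.mulShift x (d ^ 2)]; rfl
    _ = quadraticChar F x * quadraticGaussSum ψ * ψ (-(4 * x)⁻¹ * u ^ 2) := by
      rw [sum_addChar_sq hF (AddChar.IsPrimitive.of_ne_one hψ hx), quadraticGaussSum_mulShift ψ hx]

end QuadraticSums

lemma isSquare_algebraMap_of_even_finrank {K F : Type*} [Field K] [Finite K] [Field F] [Finite F]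
    [Algebra K F] (h : Even (Module.finrank K F)) (x : K) : IsSquare (algebraMap K F x) := by
  have := Fintype.ofFinite K
  have := Fintype.ofFinite F
  rcases eq_or_ne (ringChar F) 2 with hF | hF
  · exact FiniteField.isSquare_of_char_two hF _
  rcases eq_or_ne x 0 with rfl | hx
  · simp
  have hx' : algebraMap K F x ≠ 0 := (map_ne_zero _).mpr hx
  have odd_card : Fintype.card K % 2 = 1 :=
    FiniteField.odd_card_of_char_ne_two (Algebra.ringChar_eq K F ▸ hF)
  have dvd_card_sub_one : (Fintype.card K - 1) * 2 ∣ Fintype.card F - 1 := by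
    obtain ⟨n, hn⟩ := h
    rw [Module.card_eq_pow_finrank (K := K) (V := F), hn, ← two_mul, pow_mul]
    calc
      (Fintype.card K - 1) * 2 ∣ (Fintype.card K - 1) * (Fintype.card K + 1) :=
        mul_dvd_mul_left _ (by lia)
      _ = Fintype.card K ^ 2 - 1 := by rw [mul_comm, ← Nat.sq_sub_sq, one_pow]
      _ ∣ (Fintype.card K ^ 2) ^ n - 1 := Nat.sub_one_dvd_pow_sub_one _ _
  obtain ⟨c, hc⟩ := dvd_card_sub_one
  have card_div_two : Fintype.card F / 2 = (Fintype.card K - 1) * c := by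
    have := FiniteField.odd_card_of_char_ne_two hF
    rw [mul_right_comm] at hc
    lia
  rw [FiniteField.isSquare_iff hF hx', card_div_two, ← map_pow, pow_mul,
    FiniteField.pow_card_sub_one_eq_one x hx, one_pow, map_one]

section NonzeroSums

variable {K R : Type*} [Fintype K] [DecidableEq K]

lemma card_filter_ne_zero [Zero K] [AddGroupWithOne R] :
    (#{x : K | x ≠ 0} : R) = Fintype.card K - 1 := by
  rw [filter_ne', cast_card_erase_of_mem (mem_univ _), card_univ]

lemma sum_ne_zero_addChar_mul [Field K] [CommRing R] [IsDomain R] {ψ : AddChar K R}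
    (hψ : ψ ≠ 1) (c : K) :
    ∑ x : K with x ≠ 0, ψ (x * c) = (if c = 0 then (Fintype.card K : R) else 0) - 1 := by
  have h := AddChar.sum_mulShift c (AddChar.IsPrimitive.of_ne_one hψ)
  rw [filter_ne', sum_erase_eq_sub (mem_univ _), h, zero_mul, AddChar.map_zero_eq_one]
  push_cast
  rfl

lemma sum_sum_smul_add_smul_of_homogeneous [DivisionRing K] [Ring R] {V : Type*}
    [AddCommMonoid V] [Module K V] {f : V → R} (hf : ∀ c : K, c ≠ 0 → ∀ v, f (c • v) = f v)
    (a b : V) :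
    ∑ y : K with y ≠ 0, ∑ z : K with z ≠ 0, f (y • a + z • b) =
      (Fintype.card K - 1) * ∑ t : K with t ≠ 0, f (t • a + b) := by
  rw [sum_comm, ← card_filter_ne_zero, ← nsmul_eq_mul]
  refine sum_eq_card_nsmul fun z hz ↦ ?_
  have hz : z ≠ 0 := by simpa using hz
  symm
  refine sum_equiv (Equiv.mulLeft₀ z hz) (by simp [hz]) fun t _ ↦ ?_
  rw [← hf z hz, smul_add, smul_smul]
  rfl

end NonzeroSums

section NonzeroRoots

variable {K : Type*} [Field K] [Fintype K] [DecidableEq K]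

/-- The nonzero roots of `α t² + 2γ t + β`. The middle coefficient carries a factor `2` so that the
polynomial is the dehomogenization of the symmetric form with Gram matrix `(α, γ; γ, β)`. -/
def nonzeroRoots (α β γ : K) : Finset K :=
  {t | t ≠ 0 ∧ α * t ^ 2 + 2 * γ * t + β = 0}

lemma mem_nonzeroRoots {α β γ t : K} :
    t ∈ nonzeroRoots α β γ ↔ t ≠ 0 ∧ α * t ^ 2 + 2 * γ * t + β = 0 := by
  simp [nonzeroRoots]

lemma nonzeroRoots_zero : nonzeroRoots (0 : K) 0 0 = ({t | t ≠ 0} : Finset K) := by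
  simp [nonzeroRoots]

lemma card_nonzeroRoots_comm (α β γ : K) : #(nonzeroRoots α β γ) = #(nonzeroRoots β α γ) := by
  have inv_mem {α β t : K} (ht : t ∈ nonzeroRoots α β γ) : t⁻¹ ∈ nonzeroRoots β α γ := by
    obtain ⟨ht, h⟩ := mem_nonzeroRoots.mp ht
    refine mem_nonzeroRoots.mpr ⟨inv_ne_zero ht, ?_⟩
    field_simp
    linear_combination h
  exact card_nbij' (·⁻¹) (·⁻¹) (fun _ ↦ inv_mem) (fun _ ↦ inv_mem) (fun t _ ↦ inv_inv t)
    (fun t _ ↦ inv_inv t)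

lemma card_nonzeroRoots_of_ne_zero (hK : ringChar K ≠ 2) {α β : K} (hα : α ≠ 0) (hβ : β ≠ 0)
    (γ : K) : (#(nonzeroRoots α β γ) : ℤ) = quadraticChar K (γ ^ 2 - α * β) + 1 := by
  rw [← quadraticChar_card_sqrts hK, Set.toFinset_ofPred]
  congr 1
  have sq_eq_iff (t : K) :
      (α * t + γ) ^ 2 = γ ^ 2 - α * β ↔ α * t ^ 2 + 2 * γ * t + β = 0 := by
    have factor : (α * t + γ) ^ 2 - (γ ^ 2 - α * β) = α * (α * t ^ 2 + 2 * γ * t + β) := by ring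
    rw [← sub_eq_zero, factor, mul_eq_zero, or_iff_right hα]
  have ne_zero_of_root {t : K} (h : α * t ^ 2 + 2 * γ * t + β = 0) : t ≠ 0 := by
    rintro rfl
    exact hβ (by simpa using h)
  refine card_equiv ((Equiv.mulLeft₀ α hα).trans (Equiv.addRight γ)) fun t ↦ ?_
  simpa [mem_nonzeroRoots, sq_eq_iff] using ne_zero_of_root

lemma card_nonzeroRoots_zero_left (hK : ringChar K ≠ 2) {β γ : K} (hβ : β ≠ 0) (hγ : γ ≠ 0) :
    #(nonzeroRoots 0 β γ) = 1 := by
  have htwo : (2 : K) ≠ 0 := Ring.two_ne_zero hK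
  refine card_eq_one.mpr ⟨-β / (2 * γ), ?_⟩
  ext t
  rw [mem_nonzeroRoots, mem_singleton, eq_div_iff (mul_ne_zero htwo hγ)]
  constructor
  · rintro ⟨-, h⟩
    linear_combination h
  · intro h
    refine ⟨?_, by linear_combination h⟩
    rintro rfl
    exact hβ (by simpa using h)

lemma nonzeroRoots_eq_empty (hK : ringChar K ≠ 2) {α β γ : K}
    (h : (α ≠ 0 ∧ β = 0 ∧ γ = 0) ∨ (α = 0 ∧ β ≠ 0 ∧ γ = 0) ∨ (α = 0 ∧ β = 0 ∧ γ ≠ 0)) :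
    nonzeroRoots α β γ = ∅ := by
  have htwo : (2 : K) ≠ 0 := Ring.two_ne_zero hK
  refine eq_empty_of_forall_notMem fun t ht ↦ ?_
  obtain ⟨ht, hroot⟩ := mem_nonzeroRoots.mp ht
  rcases h with ⟨hα, rfl, rfl⟩ | ⟨rfl, hβ, rfl⟩ | ⟨rfl, rfl, hγ⟩ <;> simp_all

end NonzeroRoots

section TraceCharacter

variable {K F R : Type*} [CommRing K] [CommRing F] [Algebra K F] [Monoid R]

/-- The additive character `x ↦ ψ(Tr x)` of the extension `F` induced by the additive character `ψ`
of `K`; for `K = 𝔽_p` and `ψ(c) = ζ_p^c` it is the canonical additive character `χ₁` of `F`. -/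
def traceAddChar (F : Type*) [CommRing F] [Algebra K F] (ψ : AddChar K R) : AddChar F R :=
  ψ.compAddMonoidHom (Algebra.trace K F).toAddMonoidHom

lemma traceAddChar_smul (ψ : AddChar K R) (c : K) (v : F) :
    traceAddChar F ψ (c • v) = ψ (c * Algebra.trace K F v) := by
  rw [← smul_eq_mul, ← map_smul]; rfl

lemma trace_smul_add_sq (a b : F) (t : K) :
    Algebra.trace K F ((t • a + b) ^ 2) = Algebra.trace K F (a ^ 2) * t ^ 2 +
      2 * Algebra.trace K F (a * b) * t + Algebra.trace K F (b ^ 2) := by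
  have expand : (t • a + b) ^ 2 = t ^ 2 • a ^ 2 + (2 * t) • (a * b) + b ^ 2 := by
    simp only [Algebra.smul_def, map_mul, map_pow, map_ofNat]
    ring
  rw [expand, map_add, map_add, map_smul, map_smul, smul_eq_mul, smul_eq_mul]
  ring

end TraceCharacter

lemma traceAddChar_ne_one {K F R : Type*} [Field K] [Field F] [Algebra K F]
    [FiniteDimensional K F] [Algebra.IsSeparable K F] [Monoid R] {ψ : AddChar K R} (hψ : ψ ≠ 1) :
    traceAddChar F ψ ≠ 1 :=
  (AddChar.compAddMonoidHom_injective_left (Algebra.trace K F).toAddMonoidHom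
    (Algebra.trace_surjective K F)).ne hψ

section OmegaFour

variable {K F R : Type*} [Field K] [Fintype K] [DecidableEq K] [Field F] [Fintype F]
  [Algebra K F] [CommRing R]

/-- The sum `Ω₄` of the paper, with the prime field replaced by a finite field `K` and
`c ↦ ζ_p ^ c` by an additive character `ψ` of `K`. -/
def omegaFour (ψ : AddChar K R) (a b : F) : R :=
  ∑ d : F, (∑ x : K with x ≠ 0, ψ (x * Algebra.trace K F (d ^ 2))) *
    (∑ y : K with y ≠ 0, ψ (y * Algebra.trace K F (a * d))) *
    (∑ z : K with z ≠ 0, ψ (z * Algebra.trace K F (b * d)))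

lemma omegaFour_eq_sum_quadratic (ψ : AddChar K R) (a b : F) :
    omegaFour ψ a b = ∑ y : K with y ≠ 0, ∑ z : K with z ≠ 0, ∑ x : K with x ≠ 0, ∑ d : F,
      traceAddChar F ψ (algebraMap K F x * d ^ 2 + (y • a + z • b) * d) := by
  have split_term (x y z : K) (d : F) :
      traceAddChar F ψ (algebraMap K F x * d ^ 2 + (y • a + z • b) * d) =
        ψ (x * Algebra.trace K F (d ^ 2)) * ψ (y * Algebra.trace K F (a * d)) *
          ψ (z * Algebra.trace K F (b * d)) := by
    rw [← Algebra.smul_def, add_mul, smul_mul_assoc, smul_mul_assoc, ← add_assoc,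
      AddChar.map_add_eq_mul, AddChar.map_add_eq_mul, traceAddChar_smul, traceAddChar_smul,
      traceAddChar_smul]
  simp only [split_term, sum_comm (t := (univ : Finset F)), ← sum_mul, ← mul_sum]
  rfl

variable [IsDomain R] [DecidableEq F]

lemma sum_sum_traceAddChar_quadratic (hK : ringChar K ≠ 2) (hF : Even (Module.finrank K F))
    {ψ : AddChar K R} (hψ : ψ ≠ 1) (u : F) :
    ∑ x : K with x ≠ 0, ∑ d : F, traceAddChar F ψ (algebraMap K F x * d ^ 2 + u * d) =
      quadraticGaussSum (traceAddChar F ψ) *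
        ((if Algebra.trace K F (u ^ 2) = 0 then (Fintype.card K : R) else 0) - 1) := by
  have hfour : (4 : K) ≠ 0 := four_ne_zero_of_ringChar_ne_two hK
  have weil_sum (x : K) (hx : x ≠ 0) :
      ∑ d : F, traceAddChar F ψ (algebraMap K F x * d ^ 2 + u * d) =
        quadraticGaussSum (traceAddChar F ψ) *
          ψ (-(4 * x)⁻¹ * Algebra.trace K F (u ^ 2)) := by
    have hx' : algebraMap K F x ≠ 0 := (map_ne_zero _).mpr hx
    rw [sum_addChar_mul_sq_add_mul (Algebra.ringChar_eq K F ▸ hK) (traceAddChar_ne_one hψ) hx',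
      (quadraticChar_one_iff_isSquare hx').mpr (isSquare_algebraMap_of_even_finrank hF x),
      Int.cast_one, one_mul, ← traceAddChar_smul, Algebra.smul_def]
    simp only [map_neg, map_inv₀, map_mul, map_ofNat]
  have mapsTo : ∀ x ∈ ({x | x ≠ 0} : Finset K), -(4 * x)⁻¹ ∈ ({x | x ≠ 0} : Finset K) := by
    simp [hfour]
  have involutive : ∀ x ∈ ({x | x ≠ 0} : Finset K), -(4 * -(4 * x)⁻¹)⁻¹ = x := by
    intro x _
    field_simp
  rw [← sum_ne_zero_addChar_mul hψ, mul_sum]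
  exact sum_nbij' (fun x ↦ -(4 * x)⁻¹) (fun x ↦ -(4 * x)⁻¹) mapsTo mapsTo involutive involutive
    fun x hx ↦ weil_sum x (by simpa using hx)

theorem omegaFour_eq_card_nonzeroRoots (hK : ringChar K ≠ 2) (hF : Even (Module.finrank K F))
    {ψ : AddChar K R} (hψ : ψ ≠ 1) (a b : F) :
    omegaFour ψ a b = quadraticGaussSum (traceAddChar F ψ) * ((Fintype.card K - 1) *
      (Fintype.card K * #(nonzeroRoots (Algebra.trace K F (a ^ 2)) (Algebra.trace K F (b ^ 2))
        (Algebra.trace K F (a * b))) - (Fintype.card K - 1))) := by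
  have trace_sq_homogeneous (c : K) (hc : c ≠ 0) (v : F) :
      Algebra.trace K F ((c • v) ^ 2) = 0 ↔ Algebra.trace K F (v ^ 2) = 0 := by
    rw [smul_pow, map_smul, smul_eq_zero_iff_right (pow_ne_zero 2 hc)]
  simp only [omegaFour_eq_sum_quadratic, sum_sum_traceAddChar_quadratic hK hF hψ, ← mul_sum]
  rw [sum_sum_smul_add_smul_of_homogeneous (f := fun u : F ↦
    (if Algebra.trace K F (u ^ 2) = 0 then (Fintype.card K : R) else 0) - 1)
    fun c hc v ↦ by simp only [trace_sq_homogeneous c hc v]]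
  simp only [trace_smul_add_sq, sum_sub_distrib, ← sum_filter, filter_filter, sum_const,
    nsmul_eq_mul, mul_one, card_filter_ne_zero, nonzeroRoots]
  ring

theorem Omega4_eval_m_even_general (hK : ringChar K ≠ 2) (hF : Even (Module.finrank K F))
    {ψ : AddChar K R} (hψ : ψ ≠ 1) (a b : F) {α β γ : K} (hα : α = Algebra.trace K F (a ^ 2))
    (hβ : β = Algebra.trace K F (b ^ 2)) (hγ : γ = Algebra.trace K F (a * b)) {q G : R}
    (hq : q = Fintype.card K) (hG : G = quadraticGaussSum (traceAddChar F ψ)) :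
    (α = 0 ∧ β = 0 ∧ γ = 0 → omegaFour ψ a b = G * (q - 1) ^ 3) ∧
    (α ≠ 0 ∧ β ≠ 0 ∧ α * β = γ ^ 2 → omegaFour ψ a b = G * (q - 1)) ∧
    (α ≠ 0 ∧ β ≠ 0 ∧ α * β ≠ γ ^ 2 → omegaFour ψ a b =
      quadraticChar K (γ ^ 2 - α * β) * q * (q - 1) * G + G * (q - 1)) ∧
    ((α ≠ 0 ∧ β = 0 ∧ γ = 0) ∨ (α = 0 ∧ β ≠ 0 ∧ γ = 0) ∨ (α = 0 ∧ β = 0 ∧ γ ≠ 0) →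
      omegaFour ψ a b = -(G * (q - 1) ^ 2)) ∧
    (((α = 0 ∧ β ≠ 0) ∨ (α ≠ 0 ∧ β = 0)) ∧ γ ≠ 0 → omegaFour ψ a b = G * (q - 1)) := by
  have eval {n : R} (hn : (#(nonzeroRoots α β γ) : R) = n) :
      omegaFour ψ a b = G * ((q - 1) * (q * n - (q - 1))) := by
    rw [omegaFour_eq_card_nonzeroRoots hK hF hψ, ← hα, ← hβ, ← hγ, ← hq, ← hG, hn]
  have card_generic (hα : α ≠ 0) (hβ : β ≠ 0) :
      (#(nonzeroRoots α β γ) : R) = quadraticChar K (γ ^ 2 - α * β) + 1 := by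
    exact_mod_cast congrArg (Int.cast : ℤ → R) (card_nonzeroRoots_of_ne_zero hK hα hβ γ)
  refine ⟨fun ⟨hα, hβ, hγ⟩ ↦ ?_, fun ⟨hα, hβ, h⟩ ↦ ?_, fun ⟨hα, hβ, _⟩ ↦ ?_, fun h ↦ ?_,
    fun ⟨h, hγ⟩ ↦ ?_⟩
  · rw [eval (by rw [hα, hβ, hγ, nonzeroRoots_zero, card_filter_ne_zero, ← hq])]
    ring
  · rw [eval (card_generic hα hβ), h, sub_self, quadraticChar_zero, Int.cast_zero]
    ring
  · rw [eval (card_generic hα hβ)]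
    ring
  · rw [eval (by rw [nonzeroRoots_eq_empty hK h, card_empty, Nat.cast_zero])]
    ring
  · have card_eq_one : #(nonzeroRoots α β γ) = 1 := by
      rcases h with ⟨hα, hβ⟩ | ⟨hα, hβ⟩
      · rw [hα, card_nonzeroRoots_zero_left hK hβ hγ]
      · rw [hβ, card_nonzeroRoots_comm, card_nonzeroRoots_zero_left hK hα hγ]
    rw [eval (by rw [card_eq_one, Nat.cast_one])]
    ring

end OmegaFour

lemma finrank_eq_of_card_eq_pow {K V : Type*} [DivisionRing K] [Fintype K] [AddCommGroup V]
    [Module K V] [Fintype V] {m : ℕ} (h : Fintype.card V = Fintype.card K ^ m) :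
    Module.finrank K V = m := by
  rw [Module.card_eq_pow_finrank (K := K)] at h
  exact Nat.pow_right_injective Fintype.one_lt_card h

lemma chiBar_eq_stdAddChar (p : ℕ) [NeZero p] (c : ZMod p) : chiBar p c = ZMod.stdAddChar c := by
  have h := ZMod.stdAddChar_coe (N := p) c.val
  rw [Int.cast_natCast, ZMod.natCast_zmod_val] at h
  rw [h, chiBar, zeta, ← Complex.exp_nat_mul]
  congr 1
  push_cast
  ring

section PrimeField

variable (p : ℕ) [Fact p.Prime] (F : Type) [Field F] [Fintype F]

lemma etaBar_eq_quadraticChar (c : ZMod p) : etaBar p c = quadraticChar (ZMod p) c := by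
  simp only [etaBar, quadraticChar_apply, quadraticCharFun]
  split_ifs <;> simp

lemma etaQ_eq_quadraticChar (x : F) : etaQ F x = quadraticChar F x := by
  simp only [etaQ, quadraticChar_apply, quadraticCharFun]
  split_ifs <;> simp

lemma GaussQ_eq_quadraticGaussSum [Algebra (ZMod p) F] :
    GaussQ p F = quadraticGaussSum (traceAddChar F (ZMod.stdAddChar (N := p))) := by
  simp only [GaussQ, etaQ_eq_quadraticChar, chiQ, chiBar_eq_stdAddChar]
  exact sum_filter_of_ne fun x _ hx ↦ by rintro rfl; simp at hx

end PrimeField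

theorem Omega4_eval_m_even (p m : ℕ) [Fact (Nat.Prime p)] (hp : Odd p)
    (F : Type) [Field F] [Fintype F] [Algebra (ZMod p) F]
    (hm : 0 < m) (hq : Fintype.card F = p ^ m)
    (hmeven : Even m) (a b : F) (ha : a ≠ 0) (hb : b ≠ 0)
    (hab : ∀ w : ZMod p, w ≠ 0 → a ≠ algebraMap (ZMod p) F w * b)
    (α β γ : ZMod p) (hα : α = Trq p F (a ^ 2)) (hβ : β = Trq p F (b ^ 2))
    (hγ : γ = Trq p F (a * b)) :
    (α = 0 ∧ β = 0 ∧ γ = 0 →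
      (∑ d : F,
      (∑ x ∈ univ.filter (fun x : ZMod p => x ≠ 0), chiBar p (x * Trq p F (d ^ 2))) *
      (∑ y ∈ univ.filter (fun y : ZMod p => y ≠ 0), chiBar p (y * Trq p F (a * d))) *
      (∑ z ∈ univ.filter (fun z : ZMod p => z ≠ 0), chiBar p (z * Trq p F (b * d)))) = GaussQ p F * ((p : ℂ) - 1) ^ 3) ∧
    (α ≠ 0 ∧ β ≠ 0 ∧ α * β = γ ^ 2 →
      (∑ d : F,
      (∑ x ∈ univ.filter (fun x : ZMod p => x ≠ 0), chiBar p (x * Trq p F (d ^ 2))) *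
      (∑ y ∈ univ.filter (fun y : ZMod p => y ≠ 0), chiBar p (y * Trq p F (a * d))) *
      (∑ z ∈ univ.filter (fun z : ZMod p => z ≠ 0), chiBar p (z * Trq p F (b * d)))) = GaussQ p F * ((p : ℂ) - 1)) ∧
    (α ≠ 0 ∧ β ≠ 0 ∧ α * β ≠ γ ^ 2 →
      (∑ d : F,
      (∑ x ∈ univ.filter (fun x : ZMod p => x ≠ 0), chiBar p (x * Trq p F (d ^ 2))) *
      (∑ y ∈ univ.filter (fun y : ZMod p => y ≠ 0), chiBar p (y * Trq p F (a * d))) *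
      (∑ z ∈ univ.filter (fun z : ZMod p => z ≠ 0), chiBar p (z * Trq p F (b * d)))) = etaBar p (γ ^ 2 - α * β) * (p : ℂ) * ((p : ℂ) - 1) * GaussQ p F + GaussQ p F * ((p : ℂ) - 1)) ∧
    ((α ≠ 0 ∧ β = 0 ∧ γ = 0) ∨ (α = 0 ∧ β ≠ 0 ∧ γ = 0) ∨ (α = 0 ∧ β = 0 ∧ γ ≠ 0) →
      (∑ d : F,
      (∑ x ∈ univ.filter (fun x : ZMod p => x ≠ 0), chiBar p (x * Trq p F (d ^ 2))) *
      (∑ y ∈ univ.filter (fun y : ZMod p => y ≠ 0), chiBar p (y * Trq p F (a * d))) *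
      (∑ z ∈ univ.filter (fun z : ZMod p => z ≠ 0), chiBar p (z * Trq p F (b * d)))) = -(GaussQ p F * ((p : ℂ) - 1) ^ 2)) ∧
    (((α = 0 ∧ β ≠ 0) ∨ (α ≠ 0 ∧ β = 0)) ∧ γ ≠ 0 →
      (∑ d : F,
      (∑ x ∈ univ.filter (fun x : ZMod p => x ≠ 0), chiBar p (x * Trq p F (d ^ 2))) *
      (∑ y ∈ univ.filter (fun y : ZMod p => y ≠ 0), chiBar p (y * Trq p F (a * d))) *
      (∑ z ∈ univ.filter (fun z : ZMod p => z ≠ 0), chiBar p (z * Trq p F (b * d)))) = GaussQ p F * ((p : ℂ) - 1)) := by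
  have hK : ringChar (ZMod p) ≠ 2 := by
    rw [ZMod.ringChar_zmod_n]
    exact hp.ne_two_of_dvd_nat dvd_rfl
  have hF : Even (Module.finrank (ZMod p) F) := by
    rwa [finrank_eq_of_card_eq_pow (by rw [hq, ZMod.card])]
  have hψ : ZMod.stdAddChar (N := p) ≠ 1 := by
    simpa using ZMod.isPrimitive_stdAddChar p one_ne_zero
  simp only [chiBar_eq_stdAddChar, etaBar_eq_quadraticChar]
  exact Omega4_eval_m_even_general hK hF hψ a b hα hβ hγ (by rw [ZMod.card])
    (GaussQ_eq_quadraticGaussSum p F)
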